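/- arXiv:2203.01258 — 5 statements merged into one kernel-verified Lean document; each statement's English description precedes it below -/
import Mathlib

section
/- Let A be an Artinian Gorenstein algebra of socle degree j ≥ 6 with Hilbert function (1,3,5,6^{j−5},5,3,1), written A = k[x,y,z]/I with I_2 = ⟨f⟩ and I_3 = ⟨xf, yf, zf, g⟩, and suppose f, g form a regular sequence. Then I is a complete intersection: I = (f, g, h) with deg h = j − 2. -/
/- Common background: standard graded Artinian (Gorenstein) quotients of a
polynomial ring, their graded pieces, Hilbert function, socle degree,
Lefschetz-type conditions, and Macaulay contraction duality. -/

noncomputable section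
open MvPolynomial
open scoped Classical

variable {K : Type*} [Field K] {n : ℕ}

/-- The degree-`i` graded component of `R/I`: the image in the quotient of the
homogeneous polynomials of degree `i`. -/
def gradedPiece (I : Ideal (MvPolynomial (Fin n) K)) (i : ℕ) :
    Submodule K (MvPolynomial (Fin n) K ⧸ I) :=
  (homogeneousSubmodule (Fin n) K i).map (Ideal.Quotient.mkₐ K I).toLinearMap

/-- The Hilbert function of `R/I`. -/
def hilbFn (I : Ideal (MvPolynomial (Fin n) K)) (i : ℕ) : ℕ :=
  Module.finrank K (gradedPiece I i)

/-- `I` is a homogeneous ideal. -/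
def IsHomogIdeal (I : Ideal (MvPolynomial (Fin n) K)) : Prop :=
  ∀ p ∈ I, ∀ i, homogeneousComponent i p ∈ I

/-- The socle of `R/I`: elements killed by every variable. -/
def socleSub (I : Ideal (MvPolynomial (Fin n) K)) :
    Submodule K (MvPolynomial (Fin n) K ⧸ I) :=
  ⨅ v : Fin n, LinearMap.ker (LinearMap.mulLeft K (Ideal.Quotient.mk I (X v)))

/-- `R/I` is a standard graded Artinian Gorenstein algebra. -/
def IsAG (I : Ideal (MvPolynomial (Fin n) K)) : Prop :=
  IsHomogIdeal I ∧ I ≠ ⊤ ∧ FiniteDimensional K (MvPolynomial (Fin n) K ⧸ I) ∧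
    Module.finrank K (socleSub I) = 1

/-- The socle degree: the top degree with nonzero component. -/
def socDeg (I : Ideal (MvPolynomial (Fin n) K)) : ℕ :=
  sSup {i | hilbFn I i ≠ 0}

/-- Multiplication by `ℓ ^ d` maps `A_u` bijectively onto `A_v`. -/
def PowMulBij (I : Ideal (MvPolynomial (Fin n) K)) (ℓ : MvPolynomial (Fin n) K ⧸ I)
    (d u v : ℕ) : Prop :=
  (∀ a ∈ gradedPiece I u, ℓ ^ d * a = 0 → a = 0) ∧
  (∀ b ∈ gradedPiece I v, ∃ a ∈ gradedPiece I u, ℓ ^ d * a = b)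

/-- `(A, ℓ)` is a strong Lefschetz pair: `ℓ^(j-2i) : A_i → A_(j-i)` is bijective
for all `0 ≤ i ≤ ⌊j/2⌋`, `j` the socle degree. -/
def SLPair (I : Ideal (MvPolynomial (Fin n) K)) (ℓ : MvPolynomial (Fin n) K ⧸ I) : Prop :=
  ∀ i, 2 * i ≤ socDeg I → PowMulBij I ℓ (socDeg I - 2 * i) i (socDeg I - i)

/-- `A = R/I` has the strong Lefschetz property. -/
def StrongLefschetz (I : Ideal (MvPolynomial (Fin n) K)) : Prop :=
  ∃ ℓ ∈ gradedPiece I 1, SLPair I ℓ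

/-- Contraction of `F` by the monomial `x^d`. -/
def contractMon (d : Fin n →₀ ℕ) (F : MvPolynomial (Fin n) K) : MvPolynomial (Fin n) K :=
  ∑ e ∈ F.support, if d ≤ e then monomial (e - d) (coeff e F) else 0

/-- Contraction action of a polynomial `p` on `F` (Macaulay duality pairing). -/
def contract (p F : MvPolynomial (Fin n) K) : MvPolynomial (Fin n) K :=
  ∑ d ∈ p.support, coeff d p • contractMon d F

section Grading

theorem homogeneousComponent_mul_isHomogeneous {a b : MvPolynomial (Fin n) K} {i : ℕ}
    (hb : b.IsHomogeneous i) (m : ℕ) :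
    homogeneousComponent (m + i) (a * b) = homogeneousComponent m a * b := by
  let := gradedAlgebra (σ := Fin n) (R := K)
  have h := DirectSum.coe_decompose_mul_of_right_mem_of_le (homogeneousSubmodule (Fin n) K)
    (a := a) (b := b) (n := m + i) (i := i) hb (Nat.le_add_left _ _)
  rw [Nat.add_sub_cancel] at h
  exact (decomposition.decompose'_apply _ _).symm.trans
    (h.trans (congrArg (· * b) (decomposition.decompose'_apply _ _)))

theorem homogeneousComponent_mul_eq_zero_of_lt {a b : MvPolynomial (Fin n) K} {i m : ℕ}
    (hb : b.IsHomogeneous i) (hm : m < i) : homogeneousComponent m (a * b) = 0 := by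
  let := gradedAlgebra (σ := Fin n) (R := K)
  exact (decomposition.decompose'_apply _ _).symm.trans <|
    DirectSum.coe_decompose_mul_of_right_mem_of_not_le (homogeneousSubmodule (Fin n) K)
    (a := a) (b := b) (n := m) (i := i) hb (not_le.2 hm)

theorem finrank_homogeneousSubmodule_fin_three (m : ℕ) :
    Module.finrank K (homogeneousSubmodule (Fin 3) K m) = (m + 2).choose 2 := by
  rw [homogeneousSubmodule_eq_finsupp_supported,
    (AddMonoidAlgebra.supportedEquivFinsupp (R := K) (S := K)
      {d : Fin 3 →₀ ℕ | d.degree = m}).finrank_eq]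
  have hS : {d : Fin 3 →₀ ℕ | d.degree = m} =
      ((Finset.univ : Finset (Fin 3)).finsuppAntidiag m : Set (Fin 3 →₀ ℕ)) := by
    ext d
    simp [Finsupp.degree_eq_sum]
  rw [hS, Module.finrank_finsupp_self, ← Nat.card_eq_fintype_card, Nat.card_coe_set_eq, Set.ncard_coe_finset,
    Finset.card_finsuppAntidiag_nat_eq_choose]
  simp only [Finset.card_univ, Fintype.card_fin]
  rw [show 3 + m - 1 = m + 2 by omega, Nat.choose_symm_add]

instance finiteDimensional_homogeneousSubmodule (m : ℕ) :
    FiniteDimensional K (homogeneousSubmodule (Fin n) K m) :=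
  Module.Finite.iff_fg.2 (homogeneousSubmodule_fg (Fin n) K m)

theorem exists_eq_sum_X_mul {p : MvPolynomial (Fin n) K} {d : ℕ}
    (hp : p.IsHomogeneous (d + 1)) :
    ∃ q : Fin n → MvPolynomial (Fin n) K, (∀ v, (q v).IsHomogeneous d) ∧
      p = ∑ v, X v * q v := by
  have hmem : p ∈ Ideal.span (Set.range (X : Fin n → MvPolynomial (Fin n) K)) := by
    rw [← Set.image_univ, mem_ideal_span_X_image]
    intro m hm
    have hdeg := hp.degree_eq_sum_deg_support hm
    by_contra! hcon
    have : m = 0 := by ext i; simpa using hcon i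
    subst this
    simp at hdeg
  obtain ⟨c, hc⟩ := Ideal.mem_span_range_iff_exists_fun.1 hmem
  refine ⟨fun v => homogeneousComponent d (c v),
    fun v => homogeneousComponent_isHomogeneous _ _, ?_⟩
  have h := congrArg (homogeneousComponent (d + 1)) hc
  rw [homogeneousComponent_eq_self hp, map_sum] at h
  rw [← h]
  refine Finset.sum_congr rfl fun v _ => ?_
  rw [homogeneousComponent_mul_isHomogeneous (isHomogeneous_X K v), mul_comm]

/-- The space of homogeneous elements of degree `d` in the ideal `I`. -/
def idealPiece (I : Ideal (MvPolynomial (Fin n) K)) (d : ℕ) :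
    Submodule K (MvPolynomial (Fin n) K) :=
  Submodule.restrictScalars K I ⊓ homogeneousSubmodule (Fin n) K d

theorem mem_idealPiece {I : Ideal (MvPolynomial (Fin n) K)} {d : ℕ}
    {p : MvPolynomial (Fin n) K} : p ∈ idealPiece I d ↔ p ∈ I ∧ p.IsHomogeneous d :=
  Iff.rfl

instance finiteDimensional_idealPiece (I : Ideal (MvPolynomial (Fin n) K)) (d : ℕ) :
    FiniteDimensional K (idealPiece I d) :=
  Submodule.finiteDimensional_inf_right _ _

theorem hilbFn_add_finrank_idealPiece (I : Ideal (MvPolynomial (Fin n) K)) (d : ℕ) :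
    hilbFn I d + Module.finrank K (idealPiece I d) =
      Module.finrank K (homogeneousSubmodule (Fin n) K d) := by
  have h := ((Ideal.Quotient.mkₐ K I).toLinearMap.domRestrict
    (homogeneousSubmodule (Fin n) K d)).finrank_range_add_finrank_ker
  rw [LinearMap.range_domRestrict] at h
  have hker : (LinearMap.ker ((Ideal.Quotient.mkₐ K I).toLinearMap.domRestrict
      (homogeneousSubmodule (Fin n) K d))).map (homogeneousSubmodule (Fin n) K d).subtype =
      idealPiece I d := by
    ext p
    simp only [Submodule.mem_map, LinearMap.mem_ker, LinearMap.domRestrict_apply,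
      Submodule.subtype_apply, Subtype.exists, exists_and_right, exists_eq_right,
      AlgHom.toLinearMap_apply, Ideal.Quotient.mkₐ_eq_mk, Ideal.Quotient.eq_zero_iff_mem,
      mem_idealPiece, mem_homogeneousSubmodule]
    constructor
    · rintro ⟨h1, h2⟩; exact ⟨h2, h1⟩
    · rintro ⟨h1, h2⟩; exact ⟨h2, h1⟩
  rw [← hker, Submodule.finrank_map_subtype_eq]
  exact h

theorem mem_of_hilbFn_eq_zero {I : Ideal (MvPolynomial (Fin n) K)} {d : ℕ}
    (h : hilbFn I d = 0) {p : MvPolynomial (Fin n) K} (hp : p.IsHomogeneous d) : p ∈ I := by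
  have h1 := hilbFn_add_finrank_idealPiece I d
  rw [h, zero_add] at h1
  have h2 : idealPiece I d = homogeneousSubmodule (Fin n) K d :=
    Submodule.eq_of_le_of_finrank_eq inf_le_right h1
  exact (mem_idealPiece.1 (h2 ▸ hp : p ∈ idealPiece I d)).1

theorem eq_zero_of_hilbFn_eq_finrank {I : Ideal (MvPolynomial (Fin n) K)} {d : ℕ}
    (h : hilbFn I d = Module.finrank K (homogeneousSubmodule (Fin n) K d))
    {p : MvPolynomial (Fin n) K} (hpI : p ∈ I) (hp : p.IsHomogeneous d) : p = 0 := by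
  have h1 := hilbFn_add_finrank_idealPiece I d
  have h2 : idealPiece I d = ⊥ := Submodule.finrank_eq_zero.1 (by omega)
  have h3 : p ∈ idealPiece I d := ⟨hpI, hp⟩
  simpa [h2] using h3

theorem mem_of_forall_homogeneousComponent_mem {I : Ideal (MvPolynomial (Fin n) K)}
    {p : MvPolynomial (Fin n) K} (h : ∀ i, homogeneousComponent i p ∈ I) : p ∈ I := by
  rw [← sum_homogeneousComponent p]
  exact Ideal.sum_mem _ fun i _ => h i

end Grading

section Duality

theorem exists_dual_nondegenerate {I : Ideal (MvPolynomial (Fin n) K)} {j : ℕ}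
    (hAG : IsAG I) (hj : hilbFn I j ≠ 0) (hvan : ∀ i, j < i → hilbFn I i = 0) :
    ∃ Φ : MvPolynomial (Fin n) K →ₗ[K] K, (∀ p ∈ I, Φ p = 0) ∧
      (∀ p, Φ (homogeneousComponent j p) = Φ p) ∧
      ∀ d ≤ j, ∀ p : MvPolynomial (Fin n) K, p.IsHomogeneous d →
        (∀ q : MvPolynomial (Fin n) K, q.IsHomogeneous (j - d) → Φ (p * q) = 0) → p ∈ I := by
  obtain ⟨hhom, -, hfin, hsoc⟩ := hAG
  have hsocle : ∀ p : MvPolynomial (Fin n) K,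
      Ideal.Quotient.mk I p ∈ socleSub I ↔ ∀ v, X v * p ∈ I := by
    intro p
    simp only [socleSub, Submodule.mem_iInf, LinearMap.mem_ker, LinearMap.mulLeft_apply,
      ← map_mul, Ideal.Quotient.eq_zero_iff_mem]
  have htop : ∀ p : MvPolynomial (Fin n) K, p.IsHomogeneous j →
      Ideal.Quotient.mk I p ∈ socleSub I := by
    intro p hp
    rw [hsocle]
    intro v
    refine mem_of_hilbFn_eq_zero (hvan (j + 1) (by omega)) ?_
    rw [mul_comm]
    exact hp.mul (isHomogeneous_X K v)
  obtain ⟨s, hs, hsI⟩ : ∃ s : MvPolynomial (Fin n) K, s.IsHomogeneous j ∧ s ∉ I := by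
    by_contra! hcon
    refine hj ?_
    have h1 := hilbFn_add_finrank_idealPiece I j
    have h2 : idealPiece I j = homogeneousSubmodule (Fin n) K j :=
      le_antisymm inf_le_right fun p hp => ⟨hcon p hp, hp⟩
    rw [h2] at h1
    omega
  have hs0 : Ideal.Quotient.mk I s ≠ 0 := by rwa [Ne, Ideal.Quotient.eq_zero_iff_mem]
  have hspan : ∀ p : MvPolynomial (Fin n) K, Ideal.Quotient.mk I p ∈ socleSub I →
      ∃ c : K, p - c • s ∈ I := by
    intro p hp
    obtain ⟨c, hc⟩ := (finrank_eq_one_iff_of_nonzero'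
      (⟨_, htop s hs⟩ : socleSub I) (by simpa [Subtype.ext_iff] using hs0)).1 hsoc ⟨_, hp⟩
    refine ⟨c, ?_⟩
    rw [← Ideal.Quotient.eq_zero_iff_mem, map_sub, sub_eq_zero]
    have := congrArg Subtype.val hc
    exact this.symm
  obtain ⟨Φ₀, hΦ₀⟩ := Module.Projective.exists_dual_ne_zero K hs0
  let Φ : MvPolynomial (Fin n) K →ₗ[K] K :=
    Φ₀ ∘ₗ (Ideal.Quotient.mkₐ K I).toLinearMap ∘ₗ homogeneousComponent j
  have hΦ : ∀ p, Φ p = Φ₀ (Ideal.Quotient.mk I (homogeneousComponent j p)) := fun p => rfl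
  have hΦI : ∀ p ∈ I, Φ p = 0 := by
    intro p hp
    rw [hΦ, Ideal.Quotient.eq_zero_iff_mem.2 (hhom p hp j), map_zero]
  have hΦs : Φ s ≠ 0 := by
    rw [hΦ, homogeneousComponent_eq_self hs]
    exact hΦ₀
  refine ⟨Φ, hΦI, fun p => ?_, ?_⟩
  · rw [hΦ, hΦ, homogeneousComponent_eq_self (homogeneousComponent_isHomogeneous _ _)]
  intro d hd
  induction hd using Nat.decreasingInduction with
  | self =>
    intro p hp hq
    obtain ⟨c, hc⟩ := hspan p (htop p hp)
    have h1 := hq 1 (by simpa using isHomogeneous_one (Fin n) K)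
    have h2 := hΦI _ hc
    rw [mul_one] at h1
    rw [map_sub, h1, map_smul, zero_sub, neg_eq_zero, smul_eq_mul, mul_eq_zero] at h2
    have h3 : c = 0 := h2.resolve_right hΦs
    simpa [h3] using hc
  | of_succ d hd ih =>
    intro p hp hq
    have hpsoc : Ideal.Quotient.mk I p ∈ socleSub I := by
      rw [hsocle]
      intro v
      refine ih (X v * p) ?_ ?_
      · rw [mul_comm]
        exact hp.mul (isHomogeneous_X K v)
      · intro q hqd
        rw [mul_comm (X v) p, mul_assoc]
        refine hq _ ?_
        rw [show j - d = 1 + (j - (d + 1)) by omega]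
        exact (isHomogeneous_X K v).mul hqd
    obtain ⟨c, hc⟩ := hspan p hpsoc
    have h1 := hhom _ hc d
    rwa [map_sub, map_smul, homogeneousComponent_eq_self hp, homogeneousComponent_of_mem hs,
      if_neg (by omega), smul_zero, sub_zero] at h1

/-- Over an Artinian Gorenstein quotient, the dual is generated by a single functional. -/
theorem exists_dual_representing {I : Ideal (MvPolynomial (Fin n) K)} {j : ℕ}
    (hAG : IsAG I) (hvan : ∀ i, j < i → hilbFn I i = 0)
    {Φ : MvPolynomial (Fin n) K →ₗ[K] K} (hΦI : ∀ p ∈ I, Φ p = 0)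
    (hΦj : ∀ p, Φ (homogeneousComponent j p) = Φ p)
    (hΦ : ∀ d ≤ j, ∀ p : MvPolynomial (Fin n) K, p.IsHomogeneous d →
        (∀ q : MvPolynomial (Fin n) K, q.IsHomogeneous (j - d) → Φ (p * q) = 0) → p ∈ I)
    {L : MvPolynomial (Fin n) K →ₗ[K] K} (hL : ∀ p ∈ I, L p = 0) :
    ∃ a, ∀ q, L q = Φ (a * q) := by
  obtain ⟨-, -, hfin, -⟩ := hAG
  obtain ⟨σ, hσ⟩ := LinearMap.exists_rightInverse_of_surjective
    (Ideal.Quotient.mkₐ K I).toLinearMap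
    (LinearMap.range_eq_top.2 Ideal.Quotient.mk_surjective)
  have hdesc : ∀ M : MvPolynomial (Fin n) K →ₗ[K] K, (∀ p ∈ I, M p = 0) →
      ∀ p, M (σ (Ideal.Quotient.mk I p)) = M p := by
    intro M hM p
    rw [← sub_eq_zero, ← map_sub]
    refine hM _ ?_
    rw [← Ideal.Quotient.eq_zero_iff_mem, map_sub, sub_eq_zero]
    exact LinearMap.congr_fun hσ (Ideal.Quotient.mk I p)
  let B : (MvPolynomial (Fin n) K ⧸ I) →ₗ[K] Module.Dual K (MvPolynomial (Fin n) K ⧸ I) :=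
    (LinearMap.mul K (MvPolynomial (Fin n) K ⧸ I)).compr₂ (Φ ∘ₗ σ)
  have hB : ∀ p q, B (Ideal.Quotient.mk I p) (Ideal.Quotient.mk I q) = Φ (p * q) := by
    intro p q
    rw [← hdesc Φ hΦI (p * q), map_mul]
    rfl
  have hinj : Function.Injective B := by
    rw [← LinearMap.ker_eq_bot, LinearMap.ker_eq_bot']
    intro a ha
    obtain ⟨p, rfl⟩ := Ideal.Quotient.mk_surjective a
    rw [Ideal.Quotient.eq_zero_iff_mem]
    refine mem_of_forall_homogeneousComponent_mem fun i => ?_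
    rcases lt_or_ge j i with hi | hi
    · exact mem_of_hilbFn_eq_zero (hvan i hi) (homogeneousComponent_isHomogeneous _ _)
    · refine hΦ i hi _ (homogeneousComponent_isHomogeneous _ _) fun q hq => ?_
      rw [← homogeneousComponent_mul_isHomogeneous hq, Nat.add_sub_cancel' hi, hΦj, ← hB, ha]
      rfl
  have hsurj : Function.Surjective B :=
    (LinearMap.injective_iff_surjective_of_finrank_eq_finrank
      Subspace.dual_finrank_eq.symm).1 hinj
  obtain ⟨a, ha⟩ := hsurj (L ∘ₗ σ)
  obtain ⟨p, rfl⟩ := Ideal.Quotient.mk_surjective a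
  refine ⟨p, fun q => ?_⟩
  rw [← hB, ha, ← hdesc L hL q]
  rfl

/-- If the Koszul cocycles of degree `e` modulo `I` are coboundaries, then `I` has no minimal
generator in the complementary degree `j + 1 - e`. -/
theorem exists_eq_sum_X_mul_of_cocycle {I : Ideal (MvPolynomial (Fin n) K)} {j : ℕ}
    (hAG : IsAG I) (hj : hilbFn I j ≠ 0) (hvan : ∀ i, j < i → hilbFn I i = 0)
    {d e : ℕ} (hde : d + 1 + e = j)
    (hcoc : ∀ a : Fin n → MvPolynomial (Fin n) K, (∀ v, (a v).IsHomogeneous e) →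
      (∀ v w, X w * a v - X v * a w ∈ I) → ∃ b, ∀ v, a v - X v * b ∈ I)
    {p : MvPolynomial (Fin n) K} (hpI : p ∈ I) (hp : p.IsHomogeneous (d + 2)) :
    ∃ q : Fin n → MvPolynomial (Fin n) K, (∀ v, q v ∈ idealPiece I (d + 1)) ∧
      p = ∑ v, X v * q v := by
  obtain ⟨Φ, hΦI, hΦj, hΦ⟩ := exists_dual_nondegenerate hAG hj hvan
  let T : (Fin n → idealPiece I (d + 1)) →ₗ[K] MvPolynomial (Fin n) K :=
    ∑ v, LinearMap.mulLeft K (X v) ∘ₗ (idealPiece I (d + 1)).subtype ∘ₗ LinearMap.proj v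
  have hT : ∀ q, T q = ∑ v, X v * (q v : MvPolynomial (Fin n) K) := by
    intro q
    simp [T]
  by_cases hmem : p ∈ LinearMap.range T
  · obtain ⟨q, rfl⟩ := hmem
    exact ⟨fun v => q v, fun v => (q v).2, hT q⟩
  exfalso
  obtain ⟨L, hLp, hLT⟩ := Submodule.exists_dual_map_eq_bot_of_notMem hmem inferInstance
  have hLX : ∀ v, ∀ q ∈ idealPiece I (d + 1), L (X v * q) = 0 := by
    intro v q hq
    have h1 : T (Pi.single v ⟨q, hq⟩) = X v * q := by
      rw [hT, Finset.sum_eq_single v]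
      · simp
      · intro w _ hw
        simp [Pi.single_eq_of_ne hw]
      · simp
    have h2 : L (T (Pi.single v ⟨q, hq⟩)) ∈ (LinearMap.range T).map L :=
      Submodule.mem_map_of_mem (LinearMap.mem_range_self _ _)
    rwa [hLT, Submodule.mem_bot, h1] at h2
  have hrep : ∀ v, ∃ a, ∀ q, L (X v * homogeneousComponent (d + 1) q) = Φ (a * q) := by
    intro v
    exact exists_dual_representing hAG hvan hΦI hΦj hΦ
      (L := L ∘ₗ LinearMap.mulLeft K (X v) ∘ₗ homogeneousComponent (d + 1))
      fun q hq => hLX v _ ⟨hAG.1 q hq _, homogeneousComponent_isHomogeneous _ _⟩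
  choose a ha using hrep
  have ha' : ∀ v, ∀ q : MvPolynomial (Fin n) K, q.IsHomogeneous (d + 1) →
      Φ (homogeneousComponent e (a v) * q) = L (X v * q) := by
    intro v q hq
    rw [← homogeneousComponent_mul_isHomogeneous hq, show e + (d + 1) = j by omega, hΦj, ← ha,
      homogeneousComponent_eq_self hq]
  obtain ⟨b, hb⟩ := hcoc (fun v => homogeneousComponent e (a v))
    (fun v => homogeneousComponent_isHomogeneous _ _) (by
      intro v w
      refine hΦ (e + 1) (by omega) _ ?_ ?_
      · refine IsHomogeneous.sub ?_ ?_ <;> rw [mul_comm] <;>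
          exact (homogeneousComponent_isHomogeneous _ _).mul (isHomogeneous_X K _)
      · intro q hq
        rw [show j - (e + 1) = d by omega] at hq
        have h1 := ha' v (q * X w) (hq.mul (isHomogeneous_X K w))
        have h2 := ha' w (q * X v) (hq.mul (isHomogeneous_X K v))
        rw [show (X w * homogeneousComponent e (a v) - X v * homogeneousComponent e (a w)) * q =
          homogeneousComponent e (a v) * (q * X w) - homogeneousComponent e (a w) * (q * X v)
          by ring, map_sub, h1, h2, ← map_sub,
          show X v * (q * X w) - X w * (q * X v) = 0 by ring, map_zero])
  obtain ⟨q, hq, rfl⟩ := exists_eq_sum_X_mul hp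
  refine hLp ?_
  have h1 : ∀ v, L (X v * q v) = Φ (X v * q v * b) := by
    intro v
    rw [← ha' v _ (hq v), ← sub_eq_zero, ← map_sub]
    refine hΦI _ ?_
    rw [show homogeneousComponent e (a v) * q v - X v * q v * b =
      (homogeneousComponent e (a v) - X v * b) * q v by ring]
    exact I.mul_mem_right _ (hb v)
  rw [map_sum, Finset.sum_congr rfl fun v _ => h1 v, ← map_sum, ← Finset.sum_mul]
  exact hΦI _ (I.mul_mem_right _ hpI)

end Duality

section CompleteIntersection

theorem exists_eq_X_mul_of_X_mul_comm {a : Fin n → MvPolynomial (Fin n) K} (hn : 2 ≤ n)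
    (h : ∀ v w, X w * a v = X v * a w) : ∃ b, ∀ v, a v = X v * b := by
  have hdvd : (X (⟨0, by omega⟩ : Fin n) : MvPolynomial (Fin n) K) ∣ a ⟨0, by omega⟩ := by
    have h1 : (X (⟨0, by omega⟩ : Fin n) : MvPolynomial (Fin n) K) ∣
        X ⟨1, by omega⟩ * a ⟨0, by omega⟩ := ⟨_, h ⟨0, by omega⟩ ⟨1, by omega⟩⟩
    exact (X_prime.dvd_or_dvd h1).resolve_left fun hd => by simp at hd
  obtain ⟨b, hb⟩ := hdvd
  refine ⟨b, fun v => ?_⟩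
  have h1 := h ⟨0, by omega⟩ v
  rw [hb] at h1
  refine mul_left_cancel₀ (X_ne_zero (R := K) (⟨0, by omega⟩ : Fin n)) ?_
  rw [← h1]
  ring

theorem linearForm_eq_zero {α β γ : K}
    (h : C α * X 0 + C β * X 1 + C γ * X 2 = (0 : MvPolynomial (Fin 3) K)) :
    α = 0 ∧ β = 0 ∧ γ = 0 := by
  refine ⟨?_, ?_, ?_⟩
  · simpa using congrArg (eval ![1, 0, 0]) h
  · simpa using congrArg (eval ![0, 1, 0]) h
  · simpa using congrArg (eval ![0, 0, 1]) h

theorem cocycle_coboundary_of_mem_span_singleton {f : MvPolynomial (Fin 3) K} (hf0 : f ≠ 0)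
    {a : Fin 3 → MvPolynomial (Fin 3) K}
    (h : ∀ v w, X w * a v - X v * a w ∈ Submodule.span K {f}) :
    ∃ b, ∀ v, a v = X v * b := by
  refine exists_eq_X_mul_of_X_mul_comm (by norm_num) ?_
  obtain ⟨α, hα⟩ := Submodule.mem_span_singleton.1 (h 0 1)
  obtain ⟨β, hβ⟩ := Submodule.mem_span_singleton.1 (h 1 2)
  obtain ⟨γ, hγ⟩ := Submodule.mem_span_singleton.1 (h 2 0)
  rw [smul_eq_C_mul] at hα hβ hγ
  have hlin : C β * X 0 + C γ * X 1 + C α * X 2 = (0 : MvPolynomial (Fin 3) K) := by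
    refine mul_right_cancel₀ hf0 ?_
    linear_combination X 0 * hβ + X 1 * hγ + X 2 * hα
  obtain ⟨rfl, rfl, rfl⟩ := linearForm_eq_zero hlin
  simp only [map_zero, zero_mul] at hα hβ hγ
  intro v w
  fin_cases v <;> fin_cases w <;> simp only [Fin.zero_eta, Fin.mk_one, Fin.reduceFinMk]
  · linear_combination -hα
  · linear_combination hγ
  · linear_combination hα
  · linear_combination -hβ
  · linear_combination -hγ
  · linear_combination hβ

theorem cocycle_coboundary_of_mem_span {f g : MvPolynomial (Fin 3) K} (hf0 : f ≠ 0)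
    (hfg : ∀ α β γ : K, g * (C α * X 0 + C β * X 1 + C γ * X 2) ∈ Ideal.span {f} →
      C α * X 0 + C β * X 1 + C γ * X 2 = (0 : MvPolynomial (Fin 3) K))
    {a : Fin 3 → MvPolynomial (Fin 3) K}
    (h : ∀ v w, X w * a v - X v * a w ∈
      Submodule.span K {X 0 * f, X 1 * f, X 2 * f, g}) :
    ∃ b, ∀ v, a v - X v * b ∈ Ideal.span {f} := by
  have hrep : ∀ s ∈ Submodule.span K {X 0 * f, X 1 * f, X 2 * f, g}, ∃ α β γ δ : K,
      s = (C α * X 0 + C β * X 1 + C γ * X 2) * f + C δ * g := by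
    intro s hs
    simp only [Submodule.mem_span_insert, Submodule.mem_span_singleton] at hs
    obtain ⟨α, _, ⟨β, _, ⟨γ, _, ⟨δ, rfl⟩, rfl⟩, rfl⟩, rfl⟩ := hs
    refine ⟨α, β, γ, δ, ?_⟩
    simp only [smul_eq_C_mul]
    ring
  obtain ⟨α₀, α₁, α₂, α₃, hα⟩ := hrep _ (h 1 0)
  obtain ⟨β₀, β₁, β₂, β₃, hβ⟩ := hrep _ (h 2 1)
  obtain ⟨γ₀, γ₁, γ₂, γ₃, hγ⟩ := hrep _ (h 0 2)
  obtain ⟨rfl, rfl, rfl⟩ := linearForm_eq_zero (hfg β₃ γ₃ α₃ (by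
    rw [Ideal.mem_span_singleton]
    refine ⟨-(X 2 * (C α₀ * X 0 + C α₁ * X 1 + C α₂ * X 2) +
      X 0 * (C β₀ * X 0 + C β₁ * X 1 + C β₂ * X 2) +
      X 1 * (C γ₀ * X 0 + C γ₁ * X 1 + C γ₂ * X 2)), ?_⟩
    linear_combination -X 0 * hβ - X 1 * hγ - X 2 * hα))
  simp only [map_zero, zero_mul, add_zero] at hα hβ hγ
  have hquad : X 2 * (C α₀ * X 0 + C α₁ * X 1 + C α₂ * X 2) +
      X 0 * (C β₀ * X 0 + C β₁ * X 1 + C β₂ * X 2) +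
      X 1 * (C γ₀ * X 0 + C γ₁ * X 1 + C γ₂ * X 2) = (0 : MvPolynomial (Fin 3) K) := by
    refine mul_right_cancel₀ hf0 ?_
    linear_combination -X 0 * hβ - X 1 * hγ - X 2 * hα
  have e₀ : β₀ = 0 := by simpa using congrArg (eval ![1, 0, 0]) hquad
  have e₁ : γ₁ = 0 := by simpa using congrArg (eval ![0, 1, 0]) hquad
  have e₂ : α₂ = 0 := by simpa using congrArg (eval ![0, 0, 1]) hquad
  subst e₀ e₁ e₂
  have e₃ : α₀ + β₂ = 0 := by simpa using congrArg (eval ![1, 0, 1]) hquad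
  have e₄ : α₁ + γ₂ = 0 := by simpa using congrArg (eval ![0, 1, 1]) hquad
  have e₅ : β₁ + γ₀ = 0 := by simpa using congrArg (eval ![1, 1, 0]) hquad
  obtain rfl := eq_neg_of_add_eq_zero_right e₃
  obtain rfl := eq_neg_of_add_eq_zero_right e₄
  obtain rfl := eq_neg_of_add_eq_zero_right e₅
  simp only [map_neg, map_zero, zero_mul, add_zero, zero_add] at hα hβ hγ
  obtain ⟨b, hb⟩ := exists_eq_X_mul_of_X_mul_comm (n := 3) (by norm_num)
    (a := ![a 0 + C α₁ * f, a 1 - C α₀ * f, a 2 - C β₁ * f]) (by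
      intro v w
      fin_cases v <;> fin_cases w <;>
        simp only [Fin.zero_eta, Fin.mk_one, Fin.reduceFinMk, Matrix.cons_val]
      · linear_combination -hα
      · linear_combination hγ
      · linear_combination hα
      · linear_combination -hβ
      · linear_combination -hγ
      · linear_combination hβ)
  refine ⟨b, fun v => Ideal.mem_span_singleton.2 ?_⟩
  have hv := hb v
  fin_cases v <;>
    simp only [Fin.zero_eta, Fin.mk_one, Fin.reduceFinMk, Matrix.cons_val] at hv ⊢
  · exact ⟨-C α₁, by linear_combination hv⟩
  · exact ⟨C α₀, by linear_combination hv⟩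
  · exact ⟨C β₁, by linear_combination hv⟩

theorem le_finrank_of_regular {f g : MvPolynomial (Fin 3) K}
    (hf : f.IsHomogeneous 2) (hg : g.IsHomogeneous 3) (hf0 : f ≠ 0)
    (hreg : ∀ p, g * p ∈ Ideal.span {f} → p ∈ Ideal.span {f}) (m : ℕ) :
    Module.finrank K (homogeneousSubmodule (Fin 3) K (m + 3)) ≤
      Module.finrank K (idealPiece (Ideal.span {f, g}) (m + 3)) + 6 := by
  let T : (homogeneousSubmodule (Fin 3) K (m + 1) × homogeneousSubmodule (Fin 3) K m) →ₗ[K]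
      MvPolynomial (Fin 3) K :=
    LinearMap.coprod (LinearMap.mulLeft K f ∘ₗ (homogeneousSubmodule (Fin 3) K (m + 1)).subtype)
      (LinearMap.mulLeft K g ∘ₗ (homogeneousSubmodule (Fin 3) K m).subtype)
  have hT : ∀ x, T x = f * (x.1 : MvPolynomial (Fin 3) K) + g * x.2 := fun x => rfl
  have hrange : LinearMap.range T ≤ idealPiece (Ideal.span {f, g}) (m + 3) := by
    rintro _ ⟨⟨⟨a, ha⟩, ⟨b, hb⟩⟩, rfl⟩
    rw [hT]
    refine ⟨Ideal.add_mem _ (Ideal.mul_mem_right _ _ (Ideal.subset_span (by simp)))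
      (Ideal.mul_mem_right _ _ (Ideal.subset_span (by simp))), IsHomogeneous.add ?_ ?_⟩
    · rw [show m + 3 = 2 + (m + 1) by omega]
      exact hf.mul ha
    · exact add_comm 3 m ▸ hg.mul hb
  let π : LinearMap.ker T →ₗ[K] MvPolynomial (Fin 3) K :=
    (homogeneousSubmodule (Fin 3) K m).subtype ∘ₗ LinearMap.snd K _ _ ∘ₗ
      (LinearMap.ker T).subtype
  have hπ : Function.Injective π := by
    rintro ⟨⟨⟨a, ha⟩, ⟨b, hb⟩⟩, hab⟩ ⟨⟨⟨a', ha'⟩, ⟨b', hb'⟩⟩, hab'⟩ (h : b = b')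
    subst h
    rw [LinearMap.mem_ker, hT] at hab hab'
    obtain rfl : a = a' := mul_left_cancel₀ hf0 (by linear_combination hab - hab')
    rfl
  have hπrange : ∀ y ∈ LinearMap.range π, y.IsHomogeneous m ∧ ∃ c, y = c * f := by
    rintro _ ⟨⟨⟨⟨a, ha⟩, ⟨b, hb⟩⟩, hab⟩, rfl⟩
    refine ⟨hb, ?_⟩
    rw [LinearMap.mem_ker, hT] at hab
    have h1 : g * b ∈ Ideal.span {f} :=
      Ideal.mem_span_singleton.2 ⟨-a, by linear_combination hab⟩
    obtain ⟨c, hc⟩ := Ideal.mem_span_singleton.1 (hreg b h1)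
    exact ⟨c, by rw [mul_comm]; exact hc⟩
  have hker : Module.finrank K (LinearMap.ker T) ≤ m.choose 2 := by
    rw [← LinearMap.finrank_range_of_inj hπ]
    rcases lt_or_ge m 2 with hm | hm
    · have hbot : LinearMap.range π = ⊥ := by
        rw [eq_bot_iff]
        intro y hy
        obtain ⟨hy1, c, rfl⟩ := hπrange y hy
        rw [Submodule.mem_bot, ← homogeneousComponent_eq_self hy1]
        exact homogeneousComponent_mul_eq_zero_of_lt hf hm
      rw [hbot, finrank_bot]
      exact Nat.zero_le _
    · obtain ⟨k, rfl⟩ := Nat.exists_eq_add_of_le' hm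
      have hle : LinearMap.range π ≤
          (homogeneousSubmodule (Fin 3) K k).map (LinearMap.mulRight K f) := by
        intro y hy
        obtain ⟨hy1, c, rfl⟩ := hπrange y hy
        refine ⟨homogeneousComponent k c, homogeneousComponent_isHomogeneous _ _, ?_⟩
        rw [LinearMap.mulRight_apply, ← homogeneousComponent_mul_isHomogeneous hf,
          homogeneousComponent_eq_self hy1]
      refine (Submodule.finrank_mono hle).trans ((Submodule.finrank_map_le _ _).trans ?_)
      rw [finrank_homogeneousSubmodule_fin_three]
  have h1 := T.finrank_range_add_finrank_ker
  have h2 := Submodule.finrank_mono hrange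
  rw [Module.finrank_prod, finrank_homogeneousSubmodule_fin_three,
    finrank_homogeneousSubmodule_fin_three] at h1
  rw [finrank_homogeneousSubmodule_fin_three]
  have h3 : (m + 3 + 2).choose 2 = m.choose 2 + 5 * m + 10 := by
    simp only [Nat.choose_succ_succ', zero_add, Nat.choose_zero_right, Nat.choose_one_right]; ring
  have h4 : (m + 1 + 2).choose 2 = m.choose 2 + 3 * m + 3 := by
    simp only [Nat.choose_succ_succ', zero_add, Nat.choose_zero_right, Nat.choose_one_right]; ring
  have h5 : (m + 2).choose 2 = m.choose 2 + 2 * m + 1 := by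
    simp only [Nat.choose_succ_succ', zero_add, Nat.choose_zero_right, Nat.choose_one_right]; ring
  omega

theorem exists_sup_span_singleton_eq {V : Type*} [AddCommGroup V] [Module K V]
    {S T : Submodule K V} [FiniteDimensional K T] (hST : S ≤ T)
    (h : Module.finrank K T ≤ Module.finrank K S + 1) :
    ∃ v ∈ T, S ⊔ Submodule.span K {v} = T := by
  by_cases hTS : T ≤ S
  · exact ⟨0, T.zero_mem, by simpa using le_antisymm hST hTS⟩
  obtain ⟨v, hvT, hvS⟩ := SetLike.not_le_iff_exists.1 hTS
  have hle : S ⊔ Submodule.span K {v} ≤ T :=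
    sup_le hST ((Submodule.span_singleton_le_iff_mem _ _).2 hvT)
  have : FiniteDimensional K (S ⊔ Submodule.span K {v} : Submodule K V) :=
    Submodule.finiteDimensional_of_le hle
  have hlt : S < S ⊔ Submodule.span K {v} := by
    refine lt_of_le_of_ne le_sup_left fun heq => hvS ?_
    rw [heq]
    exact Submodule.mem_sup_right (Submodule.mem_span_singleton_self v)
  refine ⟨v, hvT, Submodule.eq_of_le_of_finrank_le hle ?_⟩
  have := Submodule.finrank_lt_finrank_of_lt hlt
  omega

end CompleteIntersection

/-- let `A = k[x,y,z]/I` be Artinian Gorenstein of socle degree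
`j ≥ 6` with Hilbert function `(1,3,5,6^{j-5},5,3,1)`, with `I_2 = ⟨f⟩`,
`I_3 = ⟨xf, yf, zf, g⟩`, and suppose `f, g` is a regular sequence. Then `I` is a
complete intersection `I = (f, g, h)` with `deg h = j - 2`. -/
theorem stmt12 (I : Ideal (MvPolynomial (Fin 3) K)) (j : ℕ) (hj : 6 ≤ j)
    (hAG : IsAG I) (hsoc : socDeg I = j)
    (h0 : hilbFn I 0 = 1) (h1 : hilbFn I 1 = 3) (h2 : hilbFn I 2 = 5)
    (hmid : ∀ i, 3 ≤ i → i ≤ j - 3 → hilbFn I i = 6)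
    (h3 : hilbFn I (j - 2) = 5) (h4 : hilbFn I (j - 1) = 3) (h5 : hilbFn I j = 1)
    (hvan : ∀ i, j < i → hilbFn I i = 0)
    (f g : MvPolynomial (Fin 3) K) (hf : f.IsHomogeneous 2) (hg : g.IsHomogeneous 3)
    (hI2 : Submodule.restrictScalars K I ⊓ homogeneousSubmodule (Fin 3) K 2 =
      Submodule.span K {f})
    (hI3 : Submodule.restrictScalars K I ⊓ homogeneousSubmodule (Fin 3) K 3 =
      Submodule.span K {X 0 * f, X 1 * f, X 2 * f, g})
    (hf0 : f ≠ 0)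
    (hreg : ∀ p, g * p ∈ Ideal.span {f} → p ∈ Ideal.span {f}) :
    ∃ h : MvPolynomial (Fin 3) K, h.IsHomogeneous (j - 2) ∧
      I = Ideal.span {f, g, h} := by
  have hfI : f ∈ I := (hI2.ge (Submodule.mem_span_singleton_self f)).1
  have hgI : g ∈ I := (hI3.ge (Submodule.subset_span (by simp))).1
  have hI1 : ∀ p ∈ I, p.IsHomogeneous 1 → p = 0 := fun p hpI hp =>
    eq_zero_of_hilbFn_eq_finrank (by rw [h1, finrank_homogeneousSubmodule_fin_three]; rfl) hpI hp
  have hI0 : ∀ p ∈ I, p.IsHomogeneous 0 → p = 0 := fun p hpI hp =>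
    eq_zero_of_hilbFn_eq_finrank (by rw [h0, finrank_homogeneousSubmodule_fin_three]; rfl) hpI hp
  have hj0 : hilbFn I j ≠ 0 := by omega
  have hJI : Ideal.span {f, g} ≤ I := by
    rw [Ideal.span_le]
    rintro p (rfl | rfl) <;> assumption
  have hJI' : ∀ d, idealPiece (Ideal.span {f, g}) d ≤ idealPiece I d := fun d =>
    inf_le_inf_right _ hJI
  obtain ⟨k, rfl⟩ := Nat.exists_eq_add_of_le' hj
  obtain ⟨h, hh, hsup⟩ := exists_sup_span_singleton_eq (hJI' (k + 4)) (by
    have e1 := le_finrank_of_regular hf hg hf0 hreg (k + 1)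
    have e2 := hilbFn_add_finrank_idealPiece I (k + 4)
    rw [show k + 6 - 2 = k + 4 by omega] at h3
    rw [show k + 1 + 3 = k + 4 by omega] at e1
    omega)
  refine ⟨h, hh.2, ?_⟩
  have hJ' : Ideal.span {f, g} ≤ Ideal.span {f, g, h} :=
    Ideal.span_mono (by intro p; simp; tauto)
  refine le_antisymm ?_ ?_
  swap
  · rw [Ideal.span_le]
    rintro p (rfl | rfl | rfl)
    exacts [hfI, hgI, hh.1]
  have hstep : ∀ d, k + 4 ≤ d → ∀ p ∈ I, p.IsHomogeneous (d + 1) →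
      ∃ q : Fin 3 → MvPolynomial (Fin 3) K, (∀ v, q v ∈ idealPiece I d) ∧
        p = ∑ v, X v * q v := by
    intro d hd p hpI hp
    obtain rfl | rfl | rfl | hd : d = k + 4 ∨ d = k + 5 ∨ d = k + 6 ∨ k + 7 ≤ d := by omega
    · refine exists_eq_sum_X_mul_of_cocycle hAG hj0 hvan (d := k + 3) (e := 2) (by omega)
        ?_ hpI hp
      intro a ha hcoc
      have hlin : ∀ α β γ : K, g * (C α * X 0 + C β * X 1 + C γ * X 2) ∈ Ideal.span {f} →
          C α * X 0 + C β * X 1 + C γ * X 2 = (0 : MvPolynomial (Fin 3) K) := by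
        intro α β γ hmem
        refine hI1 _ (Ideal.span_le.2 (by simpa using hfI) (hreg _ hmem)) ?_
        exact ((isHomogeneous_C_mul_X _ _).add (isHomogeneous_C_mul_X _ _)).add
          (isHomogeneous_C_mul_X _ _)
      obtain ⟨b, hb⟩ := cocycle_coboundary_of_mem_span hf0 hlin (a := a) (by
        intro v w
        rw [← hI3]
        refine ⟨hcoc v w, ?_⟩
        exact ((isHomogeneous_X K w).mul (ha v)).sub ((isHomogeneous_X K v).mul (ha w)))
      exact ⟨b, fun v => Ideal.span_le.2 (by simpa using hfI) (hb v)⟩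
    · refine exists_eq_sum_X_mul_of_cocycle hAG hj0 hvan (d := k + 4) (e := 1) (by omega)
        ?_ hpI hp
      intro a ha hcoc
      obtain ⟨b, hb⟩ := cocycle_coboundary_of_mem_span_singleton hf0 (a := a) (by
        intro v w
        rw [← hI2]
        refine ⟨hcoc v w, ?_⟩
        exact ((isHomogeneous_X K w).mul (ha v)).sub ((isHomogeneous_X K v).mul (ha w)))
      exact ⟨b, fun v => by simp [hb v]⟩
    · refine exists_eq_sum_X_mul_of_cocycle hAG hj0 hvan (d := k + 5) (e := 0) (by omega)
        ?_ hpI hp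
      intro a ha hcoc
      obtain ⟨b, hb⟩ := exists_eq_X_mul_of_X_mul_comm (a := a) (by norm_num) (by
        intro v w
        refine sub_eq_zero.1 (hI1 _ (hcoc v w) ?_)
        exact ((isHomogeneous_X K w).mul (ha v)).sub ((isHomogeneous_X K v).mul (ha w)))
      exact ⟨b, fun v => by simp [hb v]⟩
    · obtain ⟨q, hq, hpq⟩ := exists_eq_sum_X_mul hp
      exact ⟨q, fun v => ⟨mem_of_hilbFn_eq_zero (hvan d (by omega)) (hq v), hq v⟩, hpq⟩
  have hmain : ∀ d, ∀ p ∈ I, p.IsHomogeneous d → p ∈ Ideal.span {f, g, h} := by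
    intro d
    induction d with
    | zero =>
      intro p hpI hp
      rw [hI0 p hpI hp]
      exact Ideal.zero_mem _
    | succ d ih =>
      intro p hpI hp
      obtain rfl | rfl | ⟨hd2, hdk⟩ | rfl | hd : d = 0 ∨ d = 1 ∨ (2 ≤ d ∧ d ≤ k + 2) ∨
        d = k + 3 ∨ k + 4 ≤ d := by omega
      · rw [hI1 p hpI hp]
        exact Ideal.zero_mem _
      · obtain ⟨c, rfl⟩ := Submodule.mem_span_singleton.1 (hI2.le ⟨hpI, hp⟩)
        rw [smul_eq_C_mul]
        exact Ideal.mul_mem_left _ _ (Ideal.subset_span (by simp))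
      · obtain ⟨m, rfl⟩ := Nat.exists_eq_add_of_le' hd2
        have e1 := le_finrank_of_regular hf hg hf0 hreg m
        have e2 := hilbFn_add_finrank_idealPiece I (m + 3)
        rw [hmid (m + 3) (by omega) (by omega)] at e2
        have e3 := Submodule.eq_of_le_of_finrank_le (hJI' (m + 3)) (by omega)
        exact hJ' (e3.ge ⟨hpI, hp⟩).1
      · obtain ⟨y, hy, z, hz, rfl⟩ := Submodule.mem_sup.1 (hsup.ge ⟨hpI, hp⟩)
        obtain ⟨c, rfl⟩ := Submodule.mem_span_singleton.1 hz
        rw [smul_eq_C_mul]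
        exact Ideal.add_mem _ (hJ' hy.1)
          (Ideal.mul_mem_left _ _ (Ideal.subset_span (by simp)))
      · obtain ⟨q, hq, rfl⟩ := hstep d hd p hpI hp
        exact Ideal.sum_mem _ fun v _ => Ideal.mul_mem_left _ _ (ih _ (hq v).1 (hq v).2)
  intro p hp
  exact mem_of_forall_homogeneousComponent_mem fun i =>
    hmain i _ (hAG.1 p hp i) (homogeneousComponent_isHomogeneous _ _)
end
end

section
/- Let k be a field of characteristic 3 and A = k[x,y,z]/(x^3, y^3, z^2), an Artinian Gorenstein algebra with Hilbert function (1,3,5,5,3,1) and socle degree 5. Then the multiplication map (x+y+z)^3: A_1 → A_4 is not bijective (not of full rank); consequently, since every general linear form is equivalent to x+y+z by a change of coordinates permuting the monomial structure, A fails to be almost strong Lefschetz. -/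
/- Common background: standard graded Artinian (Gorenstein) quotients of a
polynomial ring, their graded pieces, Hilbert function, socle degree,
Lefschetz-type conditions, and Macaulay contraction duality. -/

noncomputable section
open MvPolynomial
open scoped Classical

variable {K : Type*} [Field K] {n : ℕ}

/-- `A = R/I` is almost strong Lefschetz: for some linear form `ℓ`, the maps
`ℓ^{j-2i} : A_i → A_{j-i}` are bijective for all `0 ≤ i ≤ ⌊j/2⌋` with `i ≠ 1`. -/
def AlmostSL (I : Ideal (MvPolynomial (Fin n) K)) : Prop :=
  ∃ ℓ ∈ gradedPiece I 1, ∀ i, 2 * i ≤ socDeg I → i ≠ 1 →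
    PowMulBij I ℓ (socDeg I - 2 * i) i (socDeg I - i)

/-- The sequence whose values are read off a finite list (zero beyond). -/
def listSeq (L : List ℕ) : ℕ → ℕ := fun i => L.getD i 0

/-- The exponent vector `(a, b, c)` of a monomial in three variables. -/
def expVec (p : Fin 3 × Fin 3 × Fin 2) : Fin 3 →₀ ℕ :=
  Finsupp.equivFunOnFinite.symm ![(p.1 : ℕ), p.2.1, p.2.2]

lemma expVec_injective : Function.Injective expVec := by
  rintro ⟨a, b, c⟩ ⟨a', b', c'⟩ h
  have h0 := DFunLike.congr_fun h 0
  have h1 := DFunLike.congr_fun h 1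
  have h2 := DFunLike.congr_fun h 2
  simp [expVec] at h0 h1 h2
  simp [Fin.ext_iff, h0, h1, h2]

variable (K) in
/-- The ideal `(x³, y³, z²)`. -/
abbrev cubeCubeSq : Ideal (MvPolynomial (Fin 3) K) :=
  Ideal.span {X 0 ^ 3, X 1 ^ 3, X 2 ^ 2}

lemma mem_cubeCubeSq_iff (q : MvPolynomial (Fin 3) K) :
    q ∈ cubeCubeSq K ↔ ∀ d ∈ q.support, 3 ≤ d 0 ∨ 3 ≤ d 1 ∨ 2 ≤ d 2 := by
  have h : cubeCubeSq K = Ideal.span ((fun s => monomial s (1 : K)) ''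
      {Finsupp.single 0 3, Finsupp.single 1 3, Finsupp.single 2 2}) := by
    simp only [cubeCubeSq, Set.image_insert_eq, Set.image_singleton, X_pow_eq_monomial]
  rw [h, mem_ideal_span_monomial_image]
  simp [Finsupp.single_le_iff]

/-- The class of the monomial with exponent vector `p` in `K[x,y,z]/(x³, y³, z²)`. -/
def monomialClass (p : Fin 3 × Fin 3 × Fin 2) : MvPolynomial (Fin 3) K ⧸ cubeCubeSq K :=
  Ideal.Quotient.mkₐ K (cubeCubeSq K) (monomial (expVec p) 1)

lemma linearIndependent_monomialClass :
    LinearIndependent K (monomialClass (K := K)) := by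
  rw [Fintype.linearIndependent_iff]
  intro g hg p
  have hmem : ∑ q, g q • monomial (expVec q) (1 : K) ∈ cubeCubeSq K := by
    rw [← Ideal.Quotient.eq_zero_iff_mem, ← Ideal.Quotient.mkₐ_eq_mk K, map_sum]
    simpa only [map_smul, monomialClass] using hg
  by_contra hp
  have hc : coeff (expVec p) (∑ q, g q • monomial (expVec q) (1 : K)) = g p := by
    simp [coeff_sum, coeff_monomial, expVec_injective.eq_iff]
  have := (mem_cubeCubeSq_iff _).1 hmem (expVec p) (by rw [mem_support_iff, hc]; exact hp)
  obtain ⟨a, b, c⟩ := p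
  simp [expVec] at this
  omega

lemma gradedPiece_cubeCubeSq (i : ℕ) :
    gradedPiece (cubeCubeSq K) i = Submodule.span K (Set.range
      fun p : {p : Fin 3 × Fin 3 × Fin 2 // (p.1 : ℕ) + p.2.1 + p.2.2 = i} =>
        monomialClass (K := K) p) := by
  apply le_antisymm
  · rintro _ ⟨q, hq, rfl⟩
    rw [q.as_sum, map_sum]
    refine Submodule.sum_mem _ fun d hd => ?_
    have hdeg : d 0 + d 1 + d 2 = i := by
      have := (mem_homogeneousSubmodule i q).1 hq (mem_support_iff.1 hd)
      rw [← this]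
      simp [Finsupp.weight_apply, Finsupp.sum_fintype, Fin.sum_univ_three]
    by_cases hlt : 3 ≤ d 0 ∨ 3 ≤ d 1 ∨ 2 ≤ d 2
    · have : monomial d (coeff d q) ∈ cubeCubeSq K := by
        rw [mem_cubeCubeSq_iff]
        intro e he
        rwa [Finset.mem_singleton.1 (support_monomial_subset he)]
      have h0 : (Ideal.Quotient.mkₐ K (cubeCubeSq K)).toLinearMap (monomial d (coeff d q)) = 0 :=
        Ideal.Quotient.eq_zero_iff_mem.2 this
      rw [h0]
      exact Submodule.zero_mem _
    · push Not at hlt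
      obtain ⟨h0, h1, h2⟩ := hlt
      have hd' : expVec (⟨d 0, h0⟩, ⟨d 1, h1⟩, ⟨d 2, h2⟩) = d := by
        ext j
        fin_cases j <;> simp [expVec]
      have hm : monomial d (coeff d q) = coeff d q • monomial d (1 : K) := by
        simp [smul_monomial]
      rw [hm, map_smul]
      refine Submodule.smul_mem _ _ (Submodule.subset_span
        ⟨⟨(⟨d 0, h0⟩, ⟨d 1, h1⟩, ⟨d 2, h2⟩), hdeg⟩, ?_⟩)
      simp [monomialClass, hd']
  · rw [Submodule.span_le]
    rintro _ ⟨⟨p, hp⟩, rfl⟩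
    refine ⟨monomial (expVec p) 1, isHomogeneous_monomial _ ?_, rfl⟩
    rw [← hp, Finsupp.degree_eq_sum, Fin.sum_univ_three]
    simp [expVec]

lemma hilbFn_cubeCubeSq (i : ℕ) :
    hilbFn (cubeCubeSq K) i = listSeq [1, 3, 5, 5, 3, 1] i := by
  have hli := (linearIndependent_monomialClass (K := K)).comp
    (Subtype.val : {p : Fin 3 × Fin 3 × Fin 2 // (p.1 : ℕ) + p.2.1 + p.2.2 = i} → _)
    Subtype.val_injective
  rw [hilbFn, gradedPiece_cubeCubeSq]
  refine (finrank_span_eq_card hli).trans ?_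
  rw [← Nat.card_eq_fintype_card]
  by_cases hi : i < 6
  · interval_cases i <;> rw [Nat.card_eq_fintype_card] <;> decide +revert
  · have : IsEmpty {p : Fin 3 × Fin 3 × Fin 2 // (p.1 : ℕ) + p.2.1 + p.2.2 = i} :=
      ⟨fun ⟨p, hp⟩ => by omega⟩
    rw [Nat.card_of_isEmpty, listSeq, List.getD_eq_default _ _ (by simpa using hi)]

lemma socDeg_cubeCubeSq : socDeg (cubeCubeSq K) = 5 := by
  refine IsGreatest.csSup_eq ⟨?_, fun i hi => ?_⟩
  · simp [hilbFn_cubeCubeSq, listSeq]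
  · by_contra h
    rw [Set.mem_ofPred_eq, hilbFn_cubeCubeSq, listSeq,
      List.getD_eq_default _ _ (by simp; omega)] at hi
    exact hi rfl

/-- In characteristic `3`, every linear form of `K[x,y,z]/(x³, y³, z²)` has zero cube. -/
lemma cube_eq_zero_of_mem_gradedPiece_one [CharP K 3]
    {ℓ : MvPolynomial (Fin 3) K ⧸ cubeCubeSq K} (hℓ : ℓ ∈ gradedPiece (cubeCubeSq K) 1) :
    ℓ ^ 3 = 0 := by
  have : Fact (Nat.Prime 3) := ⟨Nat.prime_three⟩
  obtain ⟨q, hq, rfl⟩ := hℓ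
  change (Ideal.Quotient.mk (cubeCubeSq K) q) ^ 3 = 0
  rw [← map_pow, Ideal.Quotient.eq_zero_iff_mem, q.as_sum, sum_pow_char]
  refine Ideal.sum_mem _ fun d hd => ?_
  have hdeg : d 0 + d 1 + d 2 = 1 := by
    rw [← (mem_homogeneousSubmodule 1 q).1 hq (mem_support_iff.1 hd)]
    simp [Finsupp.weight_apply, Finsupp.sum_fintype, Fin.sum_univ_three]
  rw [monomial_pow, mem_cubeCubeSq_iff]
  intro e he
  rw [Finset.mem_singleton.1 (support_monomial_subset he)]
  simp only [Finsupp.smul_apply, smul_eq_mul]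
  omega

lemma not_powMulBij_of_pow_eq_zero {I : Ideal (MvPolynomial (Fin n) K)}
    {ℓ : MvPolynomial (Fin n) K ⧸ I} {d u v : ℕ} (hℓ : ℓ ^ d = 0) (hu : hilbFn I u ≠ 0) :
    ¬ PowMulBij I ℓ d u v := by
  intro h
  have hbot : gradedPiece I u = ⊥ :=
    (Submodule.eq_bot_iff _).2 fun a ha => h.1 a ha (by rw [hℓ, zero_mul])
  exact hu (by rw [hilbFn, hbot, finrank_bot])

/-- over a field of characteristic 3, the Artinian Gorenstein algebra
`A = k[x,y,z]/(x³,y³,z²)`, of Hilbert function `(1,3,5,5,3,1)` and socle degree 5,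
has `(x+y+z)³ : A_1 → A_4` not bijective; and (any general linear form being
equivalent to `x+y+z`) `A` fails to be almost strong Lefschetz. -/
theorem stmt14 (hchar : ringChar K = 3) :
    (∀ i, hilbFn (Ideal.span {X 0 ^ 3, X 1 ^ 3, X 2 ^ 2} : Ideal (MvPolynomial (Fin 3) K)) i
        = listSeq [1, 3, 5, 5, 3, 1] i) ∧
    ¬ PowMulBij (Ideal.span {X 0 ^ 3, X 1 ^ 3, X 2 ^ 2} : Ideal (MvPolynomial (Fin 3) K))
        (Ideal.Quotient.mk _ (X 0 + X 1 + X 2)) 3 1 4 ∧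
    ¬ AlmostSL (Ideal.span {X 0 ^ 3, X 1 ^ 3, X 2 ^ 2} : Ideal (MvPolynomial (Fin 3) K)) := by
  have : CharP K 3 := hchar ▸ ringChar.charP K
  refine ⟨hilbFn_cubeCubeSq, not_powMulBij_of_pow_eq_zero
    (cube_eq_zero_of_mem_gradedPiece_one ⟨X 0 + X 1 + X 2, ?_, rfl⟩)
    (by simp [hilbFn_cubeCubeSq, listSeq]), ?_⟩
  · exact ((isHomogeneous_X K 0).add (isHomogeneous_X K 1)).add (isHomogeneous_X K 2)
  · rintro ⟨ℓ, hℓ, h⟩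
    refine not_powMulBij_of_pow_eq_zero ?_ (by simp [hilbFn_cubeCubeSq, listSeq])
      (h 0 (Nat.zero_le _) zero_ne_one)
    rw [socDeg_cubeCubeSq]
    exact pow_eq_zero_of_le (by norm_num) (cube_eq_zero_of_mem_gradedPiece_one hℓ)
end
end

section
/- Let k be a field of characteristic 2 and A = k[x,y]/(x^4, y^4), an Artinian Gorenstein algebra with Hilbert function (1,2,3,4,3,2,1) and socle degree 6. Then the multiplication map (x+y)^2: A_2 → A_4 is not of full rank; in particular this codimension two complete intersection is not almost strong Lefschetz in characteristic 2. -/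
/- Common background: standard graded Artinian (Gorenstein) quotients of a
polynomial ring, their graded pieces, Hilbert function, socle degree,
Lefschetz-type conditions, and Macaulay contraction duality. -/

noncomputable section
open MvPolynomial
open scoped Classical

variable {K : Type*} [Field K] {n : ℕ}

theorem mem_span_X_pow_four_iff {p : MvPolynomial (Fin 2) K} :
    p ∈ (Ideal.span {X 0 ^ 4, X 1 ^ 4} : Ideal (MvPolynomial (Fin 2) K)) ↔
      ∀ d ∈ p.support, 4 ≤ d 0 ∨ 4 ≤ d 1 := by
  have himage : ({X 0 ^ 4, X 1 ^ 4} : Set (MvPolynomial (Fin 2) K)) =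
      (fun d => monomial d 1) '' {Finsupp.single 0 4, Finsupp.single 1 4} := by
    simp [Set.image_pair, X_pow_eq_monomial]
  rw [himage, mem_ideal_span_monomial_image]
  simp

theorem coeff_eq_zero_of_mem_span_X_pow_four {p : MvPolynomial (Fin 2) K}
    (hp : p ∈ (Ideal.span {X 0 ^ 4, X 1 ^ 4} : Ideal (MvPolynomial (Fin 2) K)))
    {d : Fin 2 →₀ ℕ} (h0 : d 0 < 4) (h1 : d 1 < 4) : coeff d p = 0 := by
  by_contra hd
  have := mem_span_X_pow_four_iff.1 hp d (mem_support_iff.2 hd)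
  omega

theorem pow_four_mem_of_mem_span_X [CharP K 2] {p : MvPolynomial (Fin 2) K}
    (hp : p ∈ (Ideal.span {X 0, X 1} : Ideal (MvPolynomial (Fin 2) K))) :
    p ^ 4 ∈ (Ideal.span {X 0 ^ 4, X 1 ^ 4} : Ideal (MvPolynomial (Fin 2) K)) := by
  obtain ⟨a, b, rfl⟩ := Ideal.mem_span_pair.1 hp
  rw [show 4 = 2 ^ 2 by norm_num, add_pow_char_pow, mul_pow, mul_pow]
  exact Ideal.mem_span_pair.2 ⟨_, _, rfl⟩

theorem mem_span_X_of_isHomogeneous_one {p : MvPolynomial (Fin 2) K} (hp : p.IsHomogeneous 1) :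
    p ∈ (Ideal.span {X 0, X 1} : Ideal (MvPolynomial (Fin 2) K)) := by
  rw [← Set.image_pair, mem_ideal_span_X_image]
  intro d hd
  have hdeg : d.degree = 1 := by
    rw [Finsupp.degree_eq_weight_one]
    exact hp (mem_support_iff.1 hd)
  rw [Finsupp.degree_eq_sum, Fin.sum_univ_two] at hdeg
  simp only [Set.mem_insert_iff, Set.mem_singleton_iff, exists_eq_or_imp, exists_eq_left]
  omega

/-- The exponents of the monomials of degree `i` outside `(x⁴, y⁴)`. -/
abbrev StdExponent (i : ℕ) : Type := {s : Fin 4 × Fin 4 // (s.1 + s.2 : ℕ) = i}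

/-- The exponent vector attached to a standard exponent. -/
def StdExponent.toFinsupp {i : ℕ} (s : StdExponent i) : Fin 2 →₀ ℕ :=
  Finsupp.single 0 (s.1.1 : ℕ) + Finsupp.single 1 (s.1.2 : ℕ)

theorem StdExponent.toFinsupp_zero {i : ℕ} (s : StdExponent i) : s.toFinsupp 0 = s.1.1 := by
  simp [toFinsupp]

theorem StdExponent.toFinsupp_one {i : ℕ} (s : StdExponent i) : s.toFinsupp 1 = s.1.2 := by
  simp [toFinsupp]

theorem StdExponent.toFinsupp_injective {i : ℕ} :
    Function.Injective (StdExponent.toFinsupp (i := i)) := by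
  intro s t h
  have h0 := DFunLike.congr_fun h 0
  have h1 := DFunLike.congr_fun h 1
  rw [toFinsupp_zero, toFinsupp_zero] at h0
  rw [toFinsupp_one, toFinsupp_one] at h1
  exact Subtype.ext (Prod.ext (Fin.ext h0) (Fin.ext h1))

variable (K) in
/-- The class of a standard monomial in `k[x,y]/(x⁴,y⁴)`. -/
def stdMonomial (i : ℕ) (s : StdExponent i) :
    MvPolynomial (Fin 2) K ⧸ (Ideal.span {X 0 ^ 4, X 1 ^ 4} : Ideal (MvPolynomial (Fin 2) K)) :=
  (Ideal.Quotient.mkₐ K _).toLinearMap (monomial s.toFinsupp 1)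

theorem linearIndependent_stdMonomial (i : ℕ) : LinearIndependent K (stdMonomial K i) := by
  rw [Fintype.linearIndependent_iff]
  intro g hg s
  simp only [stdMonomial, ← map_smul, ← map_sum] at hg
  have hcoeff := coeff_eq_zero_of_mem_span_X_pow_four (Ideal.Quotient.eq_zero_iff_mem.1 hg)
    (d := s.toFinsupp) (by rw [s.toFinsupp_zero]; exact s.1.1.2)
    (by rw [s.toFinsupp_one]; exact s.1.2.2)
  simpa [coeff_sum, coeff_monomial, StdExponent.toFinsupp_injective.eq_iff] using hcoeff

theorem gradedPiece_span_X_pow_four (i : ℕ) :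
    gradedPiece (Ideal.span {X 0 ^ 4, X 1 ^ 4} : Ideal (MvPolynomial (Fin 2) K)) i =
      Submodule.span K (Set.range (stdMonomial K i)) := by
  apply le_antisymm
  · rintro _ ⟨p, hp, rfl⟩
    rw [p.as_sum, map_sum]
    refine Submodule.sum_mem _ fun d hd => ?_
    have hdeg : d.degree = i := by
      rw [Finsupp.degree_eq_weight_one]
      exact hp (mem_support_iff.1 hd)
    rw [Finsupp.degree_eq_sum, Fin.sum_univ_two] at hdeg
    by_cases hlt : d 0 < 4 ∧ d 1 < 4
    · let s : StdExponent i := ⟨(⟨d 0, hlt.1⟩, ⟨d 1, hlt.2⟩), hdeg⟩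
      have hs : s.toFinsupp = d := by
        ext j
        fin_cases j
        · exact s.toFinsupp_zero
        · exact s.toFinsupp_one
      have hmon : monomial d (coeff d p) = coeff d p • monomial s.toFinsupp (1 : K) := by
        rw [hs, smul_monomial, smul_eq_mul, mul_one]
      rw [hmon, map_smul]
      exact Submodule.smul_mem _ _ (Submodule.subset_span ⟨s, rfl⟩)
    · have hmem : monomial d (coeff d p) ∈
          (Ideal.span {X 0 ^ 4, X 1 ^ 4} : Ideal (MvPolynomial (Fin 2) K)) := by
        refine mem_span_X_pow_four_iff.2 fun e he => ?_
        obtain rfl := Finset.mem_singleton.1 (support_monomial_subset he)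
        omega
      convert Submodule.zero_mem _
      exact Ideal.Quotient.eq_zero_iff_mem.2 hmem
  · rw [Submodule.span_le]
    rintro _ ⟨s, rfl⟩
    refine ⟨_, isHomogeneous_monomial 1 ?_, rfl⟩
    rw [Finsupp.degree_eq_sum, Fin.sum_univ_two, s.toFinsupp_zero, s.toFinsupp_one]
    exact s.2

theorem hilbFn_span_X_pow_four (i : ℕ) :
    hilbFn (Ideal.span {X 0 ^ 4, X 1 ^ 4} : Ideal (MvPolynomial (Fin 2) K)) i =
      listSeq [1, 2, 3, 4, 3, 2, 1] i := by
  rw [hilbFn, gradedPiece_span_X_pow_four,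
    finrank_span_eq_card (linearIndependent_stdMonomial i)]
  by_cases hi : i < 7
  · rw [← Nat.card_eq_fintype_card]
    interval_cases i <;> rw [Nat.card_eq_fintype_card] <;> decide
  · have : IsEmpty (StdExponent i) := ⟨fun s => by have := s.2; omega⟩
    rw [Fintype.card_eq_zero, listSeq, List.getD_eq_default]
    simp only [List.length_cons, List.length_nil]
    omega

theorem socDeg_span_X_pow_four :
    socDeg (Ideal.span {X 0 ^ 4, X 1 ^ 4} : Ideal (MvPolynomial (Fin 2) K)) = 6 := by
  refine IsGreatest.csSup_eq ⟨?_, fun i hi => ?_⟩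
  · simp [hilbFn_span_X_pow_four, listSeq]
  · by_contra! hlt
    refine hi ?_
    rw [hilbFn_span_X_pow_four, listSeq, List.getD_eq_default]
    simp only [List.length_cons, List.length_nil]
    omega

/-- over a field of characteristic 2, the Artinian Gorenstein algebra
`A = k[x,y]/(x⁴,y⁴)`, of Hilbert function `(1,2,3,4,3,2,1)` and socle degree 6, has
`(x+y)² : A_2 → A_4` not of full rank (the two spaces have equal dimension 3, so
full rank means bijective); in particular `A` is not almost strong Lefschetz. -/
theorem stmt15 (hchar : ringChar K = 2) :
    (∀ i, hilbFn (Ideal.span {X 0 ^ 4, X 1 ^ 4} : Ideal (MvPolynomial (Fin 2) K)) i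
        = listSeq [1, 2, 3, 4, 3, 2, 1] i) ∧
    ¬ PowMulBij (Ideal.span {X 0 ^ 4, X 1 ^ 4} : Ideal (MvPolynomial (Fin 2) K))
        (Ideal.Quotient.mk _ (X 0 + X 1)) 2 2 4 ∧
    ¬ AlmostSL (Ideal.span {X 0 ^ 4, X 1 ^ 4} : Ideal (MvPolynomial (Fin 2) K)) := by
  have : CharP K 2 := ringChar.of_eq hchar
  refine ⟨hilbFn_span_X_pow_four, fun h => ?_, ?_⟩
  · have hsq : ((X 0 + X 1 : MvPolynomial (Fin 2) K)) ^ 2 = X 0 ^ 2 + X 1 ^ 2 :=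
      add_pow_char _ _ 2
    have hmem : (Ideal.Quotient.mk (Ideal.span {X 0 ^ 4, X 1 ^ 4})
        ((X 0 + X 1 : MvPolynomial (Fin 2) K) ^ 2)) ∈
        gradedPiece (Ideal.span {X 0 ^ 4, X 1 ^ 4}) 2 :=
      ⟨_, by simpa using ((isHomogeneous_X K 0).add (isHomogeneous_X K 1)).pow 2, rfl⟩
    have hzero := h.1 _ hmem (by
      rw [← map_pow, ← map_mul, ← pow_add, Ideal.Quotient.eq_zero_iff_mem]
      refine pow_four_mem_of_mem_span_X (add_mem ?_ ?_) <;>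
        exact Ideal.subset_span (by simp))
    rw [Ideal.Quotient.eq_zero_iff_mem, hsq] at hzero
    have hcoeff := coeff_eq_zero_of_mem_span_X_pow_four hzero
      (d := Finsupp.single 0 2) (by simp) (by simp)
    simp [coeff_X_pow, Finsupp.single_eq_single_iff] at hcoeff
  · rintro ⟨ℓ, ⟨p, hp, rfl⟩, h⟩
    have hone := (h 0 (Nat.zero_le _) zero_ne_one).1 1
      ⟨1, isHomogeneous_one _ _, rfl⟩ (by
        rw [socDeg_span_X_pow_four, mul_one]
        refine pow_eq_zero_of_le (by norm_num : 4 ≤ 6 - 2 * 0) ?_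
        exact (map_pow (Ideal.Quotient.mk _) p 4).symm.trans (Ideal.Quotient.eq_zero_iff_mem.2
          (pow_four_mem_of_mem_span_X (mem_span_X_of_isHomogeneous_one hp))))
    rw [← map_one (Ideal.Quotient.mk _), Ideal.Quotient.eq_zero_iff_mem] at hone
    simpa using coeff_eq_zero_of_mem_span_X_pow_four hone (d := 0) (by simp) (by simp)
end
end

section
/- Let k be a field of characteristic 3 and A = k[x,y,z]/(x^3, y^3, z^4), an Artinian complete intersection with Hilbert function (1,3,6,8,8,6,3,1) and socle degree 7. Then the multiplication map (x+y+z)^3: A_2 → A_5 is not of full rank; in particular A is not almost strong Lefschetz. -/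
/- Common background: standard graded Artinian (Gorenstein) quotients of a
polynomial ring, their graded pieces, Hilbert function, socle degree,
Lefschetz-type conditions, and Macaulay contraction duality. -/

noncomputable section
open MvPolynomial
open scoped Classical

variable {K : Type*} [Field K] {n : ℕ}

theorem finrank_span_range_eq_natCard {R M ι : Type*} [CommRing R] [Nontrivial R]
    [AddCommGroup M] [Module R M] {v : ι → M} (hv : LinearIndependent R v) :
    Module.finrank R (Submodule.span R (Set.range v)) = Nat.card ι :=
  Module.finrank_eq_nat_card_basis (Module.Basis.span hv)

/-- The monomials outside a monomial ideal are linearly independent modulo the ideal. -/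
theorem linearIndependent_standard_monomials (s : Set (Fin n →₀ ℕ)) (i : ℕ) :
    LinearIndependent K (fun d : {d : Fin n →₀ ℕ // d.degree = i ∧ ∀ e ∈ s, ¬ e ≤ d} =>
      Ideal.Quotient.mkₐ K (Ideal.span ((fun e => monomial e (1 : K)) '' s))
        (monomial d.1 1)) := by
  rw [linearIndependent_iff']
  intro t g hg j hj
  by_contra hne
  simp only [← map_smul, ← map_sum] at hg
  simp only [Ideal.Quotient.mkₐ_eq_mk, Ideal.Quotient.eq_zero_iff_mem,
    smul_eq_mul, mul_one] at hg
  rw [mem_ideal_span_monomial_image] at hg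
  have hc : coeff j.1 (∑ d ∈ t, monomial d.1 (g d)) = g j := by
    simp only [coeff_sum, coeff_monomial]
    rw [Finset.sum_eq_single_of_mem j hj]
    · simp
    · intro b _ hb
      rw [if_neg fun h => hb (Subtype.ext h)]
  obtain ⟨e, he, hle⟩ := hg j.1 (by rw [mem_support_iff, hc]; exact hne)
  exact j.2.2 e he hle

/-- The graded pieces of a monomial quotient are spanned by standard monomials. -/
theorem gradedPiece_span_monomial (s : Set (Fin n →₀ ℕ)) (i : ℕ) :
    gradedPiece (Ideal.span ((fun e => monomial e (1 : K)) '' s)) i =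
      Submodule.span K (Set.range
        (fun d : {d : Fin n →₀ ℕ // d.degree = i ∧ ∀ e ∈ s, ¬ e ≤ d} =>
          Ideal.Quotient.mkₐ K (Ideal.span ((fun e => monomial e (1 : K)) '' s))
            (monomial d.1 1))) := by
  apply le_antisymm
  · rintro _ ⟨p, hp, rfl⟩
    rw [SetLike.mem_coe, mem_homogeneousSubmodule] at hp
    rw [AlgHom.toLinearMap_apply, p.as_sum, map_sum]
    refine Submodule.sum_mem _ fun d hd => ?_
    have hdeg : d.degree = i := by
      by_contra h
      exact mem_support_iff.mp hd (hp.coeff_eq_zero h)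
    by_cases hs : ∀ e ∈ s, ¬ e ≤ d
    · rw [← mul_one (coeff d p), ← smul_eq_mul, ← smul_monomial, map_smul]
      exact Submodule.smul_mem _ _ (Submodule.subset_span ⟨⟨d, hdeg, hs⟩, rfl⟩)
    · push Not at hs
      convert Submodule.zero_mem _
      rw [Ideal.Quotient.mkₐ_eq_mk, Ideal.Quotient.eq_zero_iff_mem, mem_ideal_span_monomial_image]
      intro x hx
      rw [Finset.mem_singleton.mp (support_monomial_subset hx)]
      exact hs
  · rw [Submodule.span_le]
    rintro _ ⟨d, rfl⟩
    exact ⟨monomial d.1 1, isHomogeneous_monomial _ d.2.1, rfl⟩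

/-- The Hilbert function of a monomial quotient counts standard monomials. -/
theorem hilbFn_span_monomial (s : Set (Fin n →₀ ℕ)) (i : ℕ) :
    hilbFn (Ideal.span ((fun e => monomial e (1 : K)) '' s)) i =
      Nat.card {d : Fin n →₀ ℕ // d.degree = i ∧ ∀ e ∈ s, ¬ e ≤ d} := by
  rw [hilbFn, gradedPiece_span_monomial,
    finrank_span_range_eq_natCard (linearIndependent_standard_monomials s i)]

theorem span_pow_eq_span_monomial (a b c : ℕ) :
    (Ideal.span {X 0 ^ a, X 1 ^ b, X 2 ^ c} : Ideal (MvPolynomial (Fin 3) K)) =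
      Ideal.span ((fun e => monomial e (1 : K)) ''
        {Finsupp.single 0 a, Finsupp.single 1 b, Finsupp.single 2 c}) := by
  simp only [Set.image_insert_eq, Set.image_singleton, X_pow_eq_monomial]

/-- Exponents of standard monomials modulo `(x ^ a, y ^ b, z ^ c)` are the points of a box. -/
def standardExponentsEquiv (a b c i : ℕ) :
    {d : Fin 3 →₀ ℕ // d.degree = i ∧ ∀ e ∈ ({Finsupp.single 0 a, Finsupp.single 1 b,
      Finsupp.single 2 c} : Set (Fin 3 →₀ ℕ)), ¬ e ≤ d} ≃
    {t : Fin a × Fin b × Fin c // t.1.1 + t.2.1.1 + t.2.2.1 = i} where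
  toFun d := ⟨(⟨d.1 0, by simpa using d.2.2 _ (Or.inl rfl)⟩,
    ⟨d.1 1, by simpa using d.2.2 _ (Or.inr (Or.inl rfl))⟩,
    ⟨d.1 2, by simpa using d.2.2 _ (Or.inr (Or.inr rfl))⟩), by
      simpa [Finsupp.degree_eq_sum, Fin.sum_univ_three] using d.2.1⟩
  invFun t := ⟨Finsupp.equivFunOnFinite.symm ![t.1.1, t.1.2.1, t.1.2.2], by
    simpa [Finsupp.degree_eq_sum, Fin.sum_univ_three] using t.2⟩
  left_inv d := by
    ext j
    fin_cases j <;> rfl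
  right_inv t := rfl

theorem hilbFn_span_pow (a b c i : ℕ) :
    hilbFn (Ideal.span {X 0 ^ a, X 1 ^ b, X 2 ^ c} : Ideal (MvPolynomial (Fin 3) K)) i =
      Fintype.card {t : Fin a × Fin b × Fin c // t.1.1 + t.2.1.1 + t.2.2.1 = i} := by
  rw [span_pow_eq_span_monomial, hilbFn_span_monomial,
    Nat.card_congr (standardExponentsEquiv a b c i), Nat.card_eq_fintype_card]

theorem hilbFn_span_three_three_four (i : ℕ) :
    hilbFn (Ideal.span {X 0 ^ 3, X 1 ^ 3, X 2 ^ 4} : Ideal (MvPolynomial (Fin 3) K)) i =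
      listSeq [1, 3, 6, 8, 8, 6, 3, 1] i := by
  rw [hilbFn_span_pow]
  rcases lt_or_ge i 8 with hi | hi
  · interval_cases i <;> rfl
  · rw [listSeq, List.getD_eq_default _ _ (by simpa using hi), Fintype.card_eq_zero_iff]
    exact ⟨fun t => by have := t.2; omega⟩

theorem socDeg_span_three_three_four :
    socDeg (Ideal.span {X 0 ^ 3, X 1 ^ 3, X 2 ^ 4} : Ideal (MvPolynomial (Fin 3) K)) = 7 := by
  refine IsGreatest.csSup_eq ⟨?_, fun i hi => ?_⟩
  · rw [Set.mem_ofPred_eq, hilbFn_span_three_three_four]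
    simp [listSeq]
  · by_contra h
    rw [Set.mem_ofPred_eq, hilbFn_span_three_three_four, listSeq,
      List.getD_eq_default _ _ (by simp; omega)] at hi
    exact hi rfl

/-- A linear form in three variables is a combination of the variables modulo `I`. -/
theorem exists_eq_of_mem_gradedPiece_one {I : Ideal (MvPolynomial (Fin 3) K)}
    {ℓ : MvPolynomial (Fin 3) K ⧸ I} (hℓ : ℓ ∈ gradedPiece I 1) :
    ∃ c : Fin 3 → K, ℓ = Ideal.Quotient.mk I (∑ j, C (c j) * X j) := by
  obtain ⟨p, hp, rfl⟩ := hℓ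
  rw [SetLike.mem_coe, homogeneousSubmodule_one_eq_span_X, Submodule.mem_span_range_iff_exists_fun]
    at hp
  obtain ⟨c, rfl⟩ := hp
  exact ⟨c, by simp [smul_eq_C_mul]⟩

/-- In characteristic three the cube of a linear form kills the class of `z ^ 2`. -/
theorem linear_form_cube_mul_eq_zero (hchar : ringChar K = 3) (c : Fin 3 → K) :
    Ideal.Quotient.mk (Ideal.span {X 0 ^ 3, X 1 ^ 3, X 2 ^ 4} : Ideal (MvPolynomial (Fin 3) K))
      (∑ j, C (c j) * X j) ^ 3 * Ideal.Quotient.mk _ (X 2 ^ 2) = 0 := by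
  have : CharP K 3 := ringChar.of_eq hchar
  have : Fact (Nat.Prime 3) := ⟨Nat.prime_three⟩
  rw [← map_pow, ← map_mul, Ideal.Quotient.eq_zero_iff_mem, Fin.sum_univ_three,
    add_pow_char, add_pow_char, Ideal.mem_span_insert]
  refine ⟨C (c 0) ^ 3 * X 2 ^ 2, (C (c 1) ^ 3 * X 2 ^ 2) * X 1 ^ 3 + (C (c 2) ^ 3 * X 2) * X 2 ^ 4,
    Ideal.mem_span_pair.mpr ⟨_, _, rfl⟩, by ring⟩

theorem mk_z_sq_ne_zero :
    Ideal.Quotient.mk (Ideal.span {X 0 ^ 3, X 1 ^ 3, X 2 ^ 4} : Ideal (MvPolynomial (Fin 3) K))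
      (X 2 ^ 2) ≠ 0 := by
  rw [Ne, Ideal.Quotient.eq_zero_iff_mem, span_pow_eq_span_monomial, mem_ideal_span_monomial_image]
  intro h
  obtain ⟨e, he, hle⟩ := h (Finsupp.single 2 2) (by simp [X_pow_eq_monomial])
  rcases he with rfl | rfl | rfl <;> simp at hle

theorem not_powMulBij_three_two (hchar : ringChar K = 3) (c : Fin 3 → K) (v : ℕ) :
    ¬ PowMulBij (Ideal.span {X 0 ^ 3, X 1 ^ 3, X 2 ^ 4} : Ideal (MvPolynomial (Fin 3) K))
      (Ideal.Quotient.mk _ (∑ j, C (c j) * X j)) 3 2 v := fun h =>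
  mk_z_sq_ne_zero (h.1 _ ⟨X 2 ^ 2, isHomogeneous_X_pow 2 2, rfl⟩
    (linear_form_cube_mul_eq_zero hchar c))

/-- over a field of characteristic 3, the Artinian complete
intersection `A = k[x,y,z]/(x³,y³,z⁴)`, of Hilbert function `(1,3,6,8,8,6,3,1)` and
socle degree 7, has `(x+y+z)³ : A_2 → A_5` not of full rank (both spaces have
dimension 6, so full rank means bijective); in particular `A` is not almost strong
Lefschetz. -/
theorem stmt16 (hchar : ringChar K = 3) :
    (∀ i, hilbFn (Ideal.span {X 0 ^ 3, X 1 ^ 3, X 2 ^ 4} : Ideal (MvPolynomial (Fin 3) K)) i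
        = listSeq [1, 3, 6, 8, 8, 6, 3, 1] i) ∧
    ¬ PowMulBij (Ideal.span {X 0 ^ 3, X 1 ^ 3, X 2 ^ 4} : Ideal (MvPolynomial (Fin 3) K))
        (Ideal.Quotient.mk _ (X 0 + X 1 + X 2)) 3 2 5 ∧
    ¬ AlmostSL (Ideal.span {X 0 ^ 3, X 1 ^ 3, X 2 ^ 4} : Ideal (MvPolynomial (Fin 3) K)) := by
  refine ⟨hilbFn_span_three_three_four, ?_, ?_⟩
  · simpa [Fin.sum_univ_three] using not_powMulBij_three_two hchar (fun _ => 1) 5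
  · rintro ⟨ℓ, hℓ, h⟩
    obtain ⟨c, rfl⟩ := exists_eq_of_mem_gradedPiece_one hℓ
    have h2 := h 2 (by rw [socDeg_span_three_three_four]; norm_num) (by norm_num)
    rw [socDeg_span_three_three_four] at h2
    exact not_powMulBij_three_two hchar c 5 h2
end
end

section
/- Let A' = k[x,y,z]/(f,g) be a complete intersection defined by a regular sequence with deg f = 2, deg g = 3, let h ∈ A'_{j−2} (j ≥ 6) be a nonzero element and A = A'/(h) the resulting Artinian Gorenstein complete intersection with I = (f,g,h). Let ℓ ∈ A_1 be a non-zerodivisor on A'. If q, q' ∈ A_2 both satisfy ℓ^{j−4} q = 0 and ℓ^{j−4} q' = 0 in A, then q and q' are linearly dependent (i.e., there is at most one point of P(A_2) annihilated by ℓ^{j−4}). -/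
/- Common background: standard graded Artinian (Gorenstein) quotients of a
polynomial ring, their graded pieces, Hilbert function, socle degree,
Lefschetz-type conditions, and Macaulay contraction duality. -/

noncomputable section
open MvPolynomial
open scoped Classical

variable {K : Type*} [Field K] {n : ℕ}

section HomogeneousIdeals

attribute [local instance] MvPolynomial.gradedAlgebra

/-- If `p` and `h` are homogeneous of the same degree and `p` lies in the ideal generated by `h`
and a set `s` of homogeneous polynomials, then `p` is a scalar multiple of `h` modulo `s`. -/
theorem exists_sub_smul_mem_span_of_mem_span_insert {σ R : Type*} [CommRing R]
    {s : Set (MvPolynomial σ R)} {p h : MvPolynomial σ R} {m : ℕ}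
    (hs : ∀ r ∈ s, ∃ d, r.IsHomogeneous d) (hp : p.IsHomogeneous m) (hh : h.IsHomogeneous m)
    (hmem : p ∈ Ideal.span (insert h s)) :
    ∃ c : R, p - c • h ∈ Ideal.span s := by
  obtain ⟨a, b, hb, hpab⟩ := Ideal.mem_span_insert.1 hmem
  have hb' : homogeneousComponent m b ∈ Ideal.span s :=
    (mem_iff_homogeneousComponent_mem
      (Ideal.homogeneous_span (homogeneousSubmodule σ R) s hs) b).1 hb m
  have hah : homogeneousComponent m (a * h) = coeff 0 a • h := by
    have key := DirectSum.coe_decompose_mul_add_of_right_mem (homogeneousSubmodule σ R)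
      (i := 0) (a := a) hh
    have hdec : ∀ (φ : MvPolynomial σ R) (i : ℕ),
        (DirectSum.decompose (homogeneousSubmodule σ R) φ i : MvPolynomial σ R) =
          homogeneousComponent i φ := decomposition.decompose'_apply
    rwa [hdec, hdec, zero_add, homogeneousComponent_zero, ← smul_eq_C_mul] at key
  refine ⟨coeff 0 a, ?_⟩
  have hpm : p = coeff 0 a • h + homogeneousComponent m b := by
    rw [← hah, ← map_add, ← hpab, homogeneousComponent_of_mem hp, if_pos rfl]
  rwa [hpm, add_sub_cancel_left]

end HomogeneousIdeals

/-- let `A' = k[x,y,z]/(f,g)` be a complete intersection with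
`deg f = 2`, `deg g = 3`, let `h` be homogeneous of degree `j - 2` (`j ≥ 6`) with
`h ∉ (f,g)`, and `A = k[x,y,z]/(f,g,h)`. Let `ℓ` be a linear form that is a
non-zerodivisor on `A'`. If `q, q' ∈ A_2` both satisfy `ℓ^{j-4} q = 0` and
`ℓ^{j-4} q' = 0` in `A`, then `q` and `q'` are linearly dependent in `A`. -/
theorem stmt18 (f g h l q q' : MvPolynomial (Fin 3) K) (j : ℕ) (hj : 6 ≤ j)
    (hf : f.IsHomogeneous 2) (hg : g.IsHomogeneous 3) (hh : h.IsHomogeneous (j - 2))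
    (hl : l.IsHomogeneous 1)
    (hf0 : f ≠ 0) (hreg : ∀ p, g * p ∈ Ideal.span {f} → p ∈ Ideal.span {f})
    (hhne : h ∉ Ideal.span {f, g}) (hh0 : h ≠ 0)
    (hlreg : ∀ b : MvPolynomial (Fin 3) K ⧸ Ideal.span {f, g},
      Ideal.Quotient.mk (Ideal.span {f, g}) l * b = 0 → b = 0)
    (hq : q.IsHomogeneous 2) (hq' : q'.IsHomogeneous 2)
    (hq1 : l ^ (j - 4) * q ∈ Ideal.span {f, g, h})
    (hq2 : l ^ (j - 4) * q' ∈ Ideal.span {f, g, h}) :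
    ∃ c c' : K, (c ≠ 0 ∨ c' ≠ 0) ∧ c • q + c' • q' ∈ Ideal.span {f, g, h} := by
  have hs : ∀ r ∈ ({f, g} : Set (MvPolynomial (Fin 3) K)), ∃ d, r.IsHomogeneous d := by
    rintro r (rfl | rfl)
    exacts [⟨2, hf⟩, ⟨3, hg⟩]
  have hset : ({f, g, h} : Set (MvPolynomial (Fin 3) K)) = insert h {f, g} := by
    ext r
    simp only [Set.mem_insert_iff, Set.mem_singleton_iff]
    tauto
  have hdeg : ∀ r : MvPolynomial (Fin 3) K, r.IsHomogeneous 2 →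
      (l ^ (j - 4) * r).IsHomogeneous (j - 2) := fun r hr => by
    convert (hl.pow (j - 4)).mul hr using 1
    omega
  have hcancel : ∀ (m : ℕ) (r : MvPolynomial (Fin 3) K),
      l ^ m * r ∈ Ideal.span {f, g} → r ∈ Ideal.span {f, g} := by
    intro m r hr
    induction m with
    | zero => simpa using hr
    | succ m ih =>
      refine ih (Ideal.Quotient.eq_zero_iff_mem.1 (hlreg _ ?_))
      rwa [← map_mul, Ideal.Quotient.eq_zero_iff_mem, ← mul_assoc, ← pow_succ']
  have hle : Ideal.span {f, g} ≤ Ideal.span {f, g, h} :=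
    Ideal.span_mono (hset ▸ Set.subset_insert h {f, g})
  obtain ⟨a, ha⟩ :=
    exists_sub_smul_mem_span_of_mem_span_insert hs (hdeg q hq) hh (hset ▸ hq1)
  obtain ⟨b, hb⟩ :=
    exists_sub_smul_mem_span_of_mem_span_insert hs (hdeg q' hq') hh (hset ▸ hq2)
  by_cases ha0 : a = 0
  · refine ⟨1, 0, Or.inl one_ne_zero, hle (hcancel (j - 4) _ ?_)⟩
    simpa [ha0] using ha
  · refine ⟨b, -a, Or.inr (neg_ne_zero.2 ha0), hle (hcancel (j - 4) _ ?_)⟩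
    have hcomb := Ideal.sub_mem _ (Ideal.mul_mem_left _ (C b) ha) (Ideal.mul_mem_left _ (C a) hb)
    convert hcomb using 1
    simp only [smul_eq_C_mul, map_neg]
    ring
end
end
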